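/- Let d ≥ 3. There exists δ_d > 0 such that for every integer p ≥ 2 and every pair of distinct sites s₀, s_i of the torus T_p^d, the simple random walk started at s₀ satisfies P_{s₀}(τ_{s_i} < τ_{s₀}) ≥ δ_d; consequently, the expected number of returns of the walk to s₀ strictly before it first hits s_i is at most 1/δ_d. -/

import Mathlib

open scoped BigOperators

/-- One-step transition probability of the discrete-time simple random walk on the torus
`T_p^d = (ℤ/pℤ)^d`: the walk jumps to one of its `2d` nearest neighbours, chosen
uniformly at random. -/
noncomputable def srwStep (d p : ℕ) [NeZero p] (i j : Fin d → ZMod p) : ℝ :=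
  ((Finset.univ.filter fun m : Fin d × Bool =>
      j = Function.update i m.1 (i m.1 + (if m.2 then 1 else -1))).card : ℝ) / (2 * d)

/-- Probability of a given finite trajectory of the simple random walk. -/
noncomputable def srwPathProb (d p : ℕ) [NeZero p] {n : ℕ}
    (x : Fin (n + 1) → (Fin d → ZMod p)) : ℝ :=
  ∏ k : Fin n, srwStep d p (x k.castSucc) (x k.succ)

open scoped Classical in
/-- `P_{s₀}(τ_{s_i} < τ_{s₀})`: the probability that the simple random walk started at
`s₀` hits `s_i` strictly before returning to `s₀`, written as a sum over finite paths
from `s₀` to `s_i` avoiding `{s₀, s_i}` at all intermediate times. -/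
noncomputable def srwHitBeforeReturn (d p : ℕ) [NeZero p] (s₀ si : Fin d → ZMod p) : ℝ :=
  ∑' n : ℕ, ∑ x ∈ Finset.univ.filter
      (fun x : Fin (n + 2) → (Fin d → ZMod p) =>
        x 0 = s₀ ∧ x (Fin.last (n + 1)) = si ∧
        ∀ m : Fin (n + 2), m ≠ 0 → m ≠ Fin.last (n + 1) → x m ≠ s₀ ∧ x m ≠ si),
    srwPathProb d p x

open scoped Classical in
/-- The expected number of returns of the walk to `s₀` strictly before it first hits
`s_i`: the sum over `n ≥ 1` of `P_{s₀}(X_n = s₀, τ_{s_i} > n)`, written as a sum over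
finite paths from `s₀` back to `s₀` avoiding `s_i`. -/
noncomputable def srwExpectedReturns (d p : ℕ) [NeZero p] (s₀ si : Fin d → ZMod p) : ℝ :=
  ∑' n : ℕ, ∑ x ∈ Finset.univ.filter
      (fun x : Fin (n + 2) → (Fin d → ZMod p) =>
        x 0 = s₀ ∧ x (Fin.last (n + 1)) = s₀ ∧ ∀ m : Fin (n + 2), x m ≠ si),
    srwPathProb d p x

/-!
Let `h` be the probability to hit `t` before `s`, as a function of the starting point, and `q` the
probability that the walk started at `s` hits `t` before returning to `s`. If `g` solves
`g - P g = δ_t - δ_s`, then Green's identity for `g` and `h`, available because `P` is symmetric,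
reads `q * (g t - g s) = 1`, so a lower bound for `q` is an upper bound for `g t - g s`.
On the torus, Fourier inversion gives such a `g`, and bounds `g t - g s` by four times `p⁻ᵈ` times
the sum of `1 / (1 - λ)` over the nontrivial characters, `λ` being the eigenvalue of the walk.
For the frequency `k`, `1 - λ` is at least of order `p⁻² ∑ |k_j|²`, hence, by AM-GM, of order
`p⁻² ∏ |k_j|^(2/d)`. The sum over `k` then factorizes into `d` one-dimensional sums
`∑ |a|^(-2/d)`, which are of order `p^(1-2/d)` because `2/d < 1`; the powers of `p` cancel.
Finally, `ψ = (1 - h) / q` is a supersolution of the equation for the expected number of visits to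
`s` before `t`, and `(P ψ) s = 1/q - 1` bounds the expected number of returns.
-/

open Matrix

section Excursions

variable {α : Type*} {n : ℕ}

/-- The path `x` of length `n + 1` goes from `s` to `t` and stays in `A` at all intermediate times;
the endpoints themselves are not required to lie in `A`. -/
def IsExcursion (A : Set α) (s t : α) (x : Fin (n + 2) → α) : Prop :=
  x 0 = s ∧ x (Fin.last (n + 1)) = t ∧
    ∀ m : Fin (n + 2), m ≠ 0 → m ≠ Fin.last (n + 1) → x m ∈ A

/-- The weight of a path under the kernel `P`: the product of the entries of `P` along its steps. -/
def pathWeight (P : Matrix α α ℝ) (x : Fin (n + 1) → α) : ℝ :=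
  ∏ k : Fin n, P (x k.castSucc) (x k.succ)

open scoped Classical in
/-- The total weight of the excursions of length `n + 1` from `s` to `t` through `A`. For a
stochastic kernel this is the probability that the chain started at `s` is at `t` at time `n + 1`,
and in `A` at the times `1, …, n`. -/
noncomputable def pathSum [Fintype α] (P : Matrix α α ℝ) (A : Set α) (t : α) (n : ℕ) (s : α) : ℝ :=
  ∑ x : Fin (n + 2) → α with IsExcursion A s t x, pathWeight P x

variable {P : Matrix α α ℝ} {A : Set α} {s t : α}

lemma isExcursion_cons {a : α} {x : Fin (n + 2) → α} :
    IsExcursion A s t (Fin.cons a x : Fin (n + 3) → α) ↔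
      a = s ∧ x 0 ∈ A ∧ IsExcursion A (x 0) t x := by
  have interior : (∀ m : Fin (n + 3), m ≠ 0 → m ≠ Fin.last (n + 2) →
        (Fin.cons a x : Fin (n + 3) → α) m ∈ A) ↔
      x 0 ∈ A ∧ ∀ m : Fin (n + 2), m ≠ 0 → m ≠ Fin.last (n + 1) → x m ∈ A := by
    simp only [Fin.forall_fin_succ (n := n + 2), Fin.forall_fin_succ (n := n + 1), Fin.cons_succ,
      ← Fin.succ_last, Fin.succ_inj, Fin.succ_ne_zero, ne_eq, not_true_eq_false, not_false_eq_true,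
      (Fin.succ_ne_zero _).symm, false_imp_iff, true_imp_iff, true_and]
  rw [IsExcursion, interior, ← Fin.succ_last, Fin.cons_zero, Fin.cons_succ]
  simp only [IsExcursion, true_and]
  tauto

lemma pathWeight_cons (a : α) (x : Fin (n + 1) → α) :
    pathWeight P (Fin.cons a x : Fin (n + 2) → α) = P a (x 0) * pathWeight P x := by
  simp [pathWeight, Fin.prod_univ_succ]

variable [Fintype α]

lemma pathSum_nonneg (hP : ∀ x y, 0 ≤ P x y) : 0 ≤ pathSum P A t n s :=
  Finset.sum_nonneg fun _ _ => Finset.prod_nonneg fun _ _ => hP _ _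

lemma pathSum_zero [DecidableEq α] : pathSum P A t 0 = P *ᵥ Pi.single t 1 := by
  classical
  ext s
  have isExcursion_iff (x : Fin 2 → α) : IsExcursion A s t x ↔ x 0 = s ∧ x 1 = t := by
    simp [IsExcursion, Fin.forall_fin_two]
  rw [pathSum, Finset.sum_filter, ← (finTwoArrowEquiv α).symm.sum_comp, Fintype.sum_prod_type]
  simp [isExcursion_iff, pathWeight, ite_and]

lemma pathSum_succ : pathSum P A t (n + 1) = P *ᵥ A.indicator (pathSum P A t n) := by
  classical
  ext s
  calc pathSum P A t (n + 1) s
      = ∑ x : Fin (n + 2) → α,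
          if x 0 ∈ A ∧ IsExcursion A (x 0) t x then P s (x 0) * pathWeight P x else 0 := by
        rw [pathSum, Finset.sum_filter, ← (Fin.consEquiv fun _ => α).sum_comp,
          Fintype.sum_prod_type]
        simp [Fin.consEquiv, isExcursion_cons, pathWeight_cons, ite_and]
    _ = ∑ x : Fin (n + 2) → α, ∑ y, if x 0 = y then
          (if y ∈ A ∧ IsExcursion A y t x then P s y * pathWeight P x else 0) else 0 := by
        simp only [Finset.sum_ite_eq, Finset.mem_univ, if_true]
    _ = ∑ y, P s y * A.indicator (pathSum P A t n) y := by
        rw [Finset.sum_comm]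
        refine Finset.sum_congr rfl fun y _ => ?_
        have start_eq {x : Fin (n + 2) → α} (hx : IsExcursion A y t x) : x 0 = y := hx.1
        rw [Set.indicator_apply, pathSum, Finset.sum_filter]
        simp only [mul_ite, mul_zero, Finset.mul_sum, ← ite_and]
        split_ifs with hy
        · simp +contextual [hy, and_iff_right_of_imp start_eq]
        · simp [hy]

end Excursions

section PotentialTheory

variable {α : Type*} [Fintype α] {P : Matrix α α ℝ} {A : Set α} {s t : α}

lemma mulVec_le_mulVec_of_nonneg (hP : ∀ x y, 0 ≤ P x y) {u v : α → ℝ} (huv : u ≤ v) :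
    P *ᵥ u ≤ P *ᵥ v := fun x =>
  dotProduct_le_dotProduct_of_nonneg_left huv (hP x)

lemma dotProduct_sub_mulVec_comm (hP : P.IsSymm) (u v : α → ℝ) :
    u ⬝ᵥ (v - P *ᵥ v) = v ⬝ᵥ (u - P *ᵥ u) := by
  rw [dotProduct_sub, dotProduct_sub, dotProduct_comm u v, dotProduct_mulVec, ← mulVec_transpose,
    hP.eq, dotProduct_comm (P *ᵥ u)]

/-- The probability that the chain with kernel `P` started at `x` visits `t` at some positive time,
and does so before it visits `s` at a positive time. -/
noncomputable def hitBefore (P : Matrix α α ℝ) (s t x : α) : ℝ :=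
  ∑' n, pathSum P {s, t}ᶜ t n x

lemma hitBefore_nonneg (hP : ∀ x y, 0 ≤ P x y) (x : α) : 0 ≤ hitBefore P s t x :=
  tsum_nonneg fun _ => pathSum_nonneg hP

variable [DecidableEq α]

lemma sum_range_succ_pathSum (N : ℕ) :
    ∑ n ∈ Finset.range (N + 1), pathSum P A t n =
      P *ᵥ (Pi.single t 1 + A.indicator (∑ n ∈ Finset.range N, pathSum P A t n)) := by
  simp only [Finset.sum_range_succ', pathSum_zero, pathSum_succ, Finset.indicator_sum,
    mulVec_add, mulVec_sum, add_comm]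

lemma sum_range_pathSum_le_mulVec (hP : ∀ x y, 0 ≤ P x y) {ψ : α → ℝ} (hψ : 0 ≤ ψ)
    (hsuper : Pi.single t 1 + A.indicator (P *ᵥ ψ) ≤ ψ) (N : ℕ) :
    ∑ n ∈ Finset.range N, pathSum P A t n ≤ P *ᵥ ψ := by
  induction N with
  | zero => simpa using mulVec_le_mulVec_of_nonneg hP hψ
  | succ N ih =>
    rw [sum_range_succ_pathSum]
    refine mulVec_le_mulVec_of_nonneg hP (le_trans ?_ hsuper)
    gcongr

lemma sum_range_pathSum_le_one (hP : P ∈ rowStochastic ℝ α) (ht : t ∉ A) (N : ℕ) :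
    ∑ n ∈ Finset.range N, pathSum P A t n ≤ 1 := by
  have hP1 : P *ᵥ 1 = 1 := hP.2
  rw [← hP1]
  refine sum_range_pathSum_le_mulVec hP.1 zero_le_one ?_ N
  intro x
  by_cases hx : x = t
  · simp [hx, ht]
  · by_cases hA : x ∈ A <;> simp [hx, hP1, hA]

lemma hasSum_pathSum (hP : P ∈ rowStochastic ℝ α) (ht : t ∉ A) (x : α) :
    HasSum (fun n => pathSum P A t n x) (∑' n, pathSum P A t n x) :=
  (summable_of_sum_range_le (c := 1) (fun _ => pathSum_nonneg hP.1) fun N => by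
    simpa using sum_range_pathSum_le_one hP ht N x).hasSum

lemma tsum_pathSum_le_one (hP : P ∈ rowStochastic ℝ α) (ht : t ∉ A) (x : α) :
    ∑' n, pathSum P A t n x ≤ 1 :=
  Real.tsum_le_of_sum_range_le (fun _ => pathSum_nonneg hP.1) fun N => by
    simpa using sum_range_pathSum_le_one hP ht N x

/-- The equilibrium potential of the pair `(s, t)`: the probability to hit `t` before `s`, where, in
contrast to `hitBefore`, a visit at time `0` counts. -/
noncomputable def equilibriumPotential (P : Matrix α α ℝ) (s t : α) : α → ℝ :=
  Pi.single t 1 + ({s, t}ᶜ : Set α).indicator (hitBefore P s t)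

lemma hitBefore_le_one (hP : P ∈ rowStochastic ℝ α) (x : α) : hitBefore P s t x ≤ 1 :=
  tsum_pathSum_le_one hP (by simp) x

lemma equilibriumPotential_left (hst : s ≠ t) : equilibriumPotential P s t s = 0 := by
  simp [equilibriumPotential, hst]

lemma equilibriumPotential_right : equilibriumPotential P s t t = 1 := by
  simp [equilibriumPotential]

lemma equilibriumPotential_of_ne {x : α} (hs : x ≠ s) (ht : x ≠ t) :
    equilibriumPotential P s t x = hitBefore P s t x := by
  simp [equilibriumPotential, hs, ht]

lemma equilibriumPotential_le_one (hP : P ∈ rowStochastic ℝ α) :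
    equilibriumPotential P s t ≤ 1 := by
  intro x
  by_cases ht : x = t
  · simp [ht, equilibriumPotential_right]
  by_cases hs : x = s
  · subst hs
    simp [equilibriumPotential_left ht]
  · simpa [equilibriumPotential_of_ne hs ht] using hitBefore_le_one hP x

lemma hitBefore_eq_mulVec (hP : P ∈ rowStochastic ℝ α) :
    hitBefore P s t = P *ᵥ equilibriumPotential P s t := by
  have tendsto_sum : Filter.Tendsto
      (fun N => ∑ n ∈ Finset.range N, pathSum P {s, t}ᶜ t n) Filter.atTop
      (nhds (hitBefore P s t)) :=
    (Pi.hasSum.2 fun x => hasSum_pathSum hP (by simp) x).tendsto_sum_nat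
  have tendsto_mulVec : Filter.Tendsto
      (fun N => ∑ n ∈ Finset.range (N + 1), pathSum P {s, t}ᶜ t n) Filter.atTop
      (nhds (P *ᵥ equilibriumPotential P s t)) := by
    have continuous_step : Continuous fun u : α → ℝ =>
        P *ᵥ (Pi.single t 1 + ({s, t}ᶜ : Set α).indicator u) := by
      classical
      refine continuous_const.matrix_mulVec (continuous_const.add (continuous_pi fun x => ?_))
      simp only [Set.indicator_apply]
      split_ifs <;> fun_prop
    simp only [sum_range_succ_pathSum]
    exact (continuous_step.tendsto _).comp tendsto_sum
  exact tendsto_nhds_unique (tendsto_sum.comp (Filter.tendsto_add_atTop_nat 1)) tendsto_mulVec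

lemma equilibriumPotential_sub_mulVec (hP : P ∈ rowStochastic ℝ α) (hst : s ≠ t) :
    equilibriumPotential P s t - P *ᵥ equilibriumPotential P s t =
      Pi.single t (1 - hitBefore P s t t) - Pi.single s (hitBefore P s t s) := by
  rw [← hitBefore_eq_mulVec hP]
  ext x
  by_cases ht : x = t
  · subst ht
    simp [equilibriumPotential_right, hst.symm]
  by_cases hs : x = s
  · subst hs
    simp [equilibriumPotential_left hst, hst]
  simp [equilibriumPotential_of_ne hs ht, hs, ht]

lemma hitBefore_add_hitBefore (hP : P ∈ rowStochastic ℝ α) (hsymm : P.IsSymm) (hst : s ≠ t) :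
    hitBefore P s t s + hitBefore P s t t = 1 := by
  have hP1 : P *ᵥ 1 = 1 := hP.2
  have := dotProduct_sub_mulVec_comm hsymm 1 (equilibriumPotential P s t)
  simp only [equilibriumPotential_sub_mulVec hP hst, dotProduct_sub, dotProduct_single,
    Pi.one_apply, one_mul, hP1, sub_self, dotProduct_zero] at this
  linarith

lemma hitBefore_mul_sub (hP : P ∈ rowStochastic ℝ α) (hsymm : P.IsSymm) (hst : s ≠ t) {g : α → ℝ}
    (hg : g - P *ᵥ g = Pi.single t 1 - Pi.single s 1) :
    hitBefore P s t s * (g t - g s) = 1 := by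
  have hbal : 1 - hitBefore P s t t = hitBefore P s t s :=
    sub_eq_of_eq_add (hitBefore_add_hitBefore hP hsymm hst).symm
  have green := dotProduct_sub_mulVec_comm hsymm g (equilibriumPotential P s t)
  rw [equilibriumPotential_sub_mulVec hP hst, hbal, hg] at green
  simp only [dotProduct_sub, dotProduct_single, equilibriumPotential_left hst,
    equilibriumPotential_right, mul_one, sub_zero] at green
  rw [← green]
  ring

lemma tsum_pathSum_compl_singleton_le (hP : P ∈ rowStochastic ℝ α) (hst : s ≠ t)
    (hpos : 0 < hitBefore P s t s) :
    ∑' n, pathSum P {t}ᶜ s n s ≤ (hitBefore P s t s)⁻¹ - 1 := by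
  set h := equilibriumPotential P s t
  set q := hitBefore P s t s
  set ψ : α → ℝ := q⁻¹ • (1 - h)
  have hψ0 : 0 ≤ ψ := smul_nonneg (by positivity) (sub_nonneg.2 (equilibriumPotential_le_one hP))
  have mulVec_ψ : P *ᵥ ψ = ψ - Pi.single s 1 + q⁻¹ • Pi.single t (1 - hitBefore P s t t) := by
    have hP1 : P *ᵥ 1 = 1 := hP.2
    have hPh : P *ᵥ h = h - (Pi.single t (1 - hitBefore P s t t) - Pi.single s q) := by
      rw [← equilibriumPotential_sub_mulVec hP hst, sub_sub_cancel]
    have single_s : Pi.single s (1 : ℝ) = q⁻¹ • Pi.single s q := by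
      rw [← Pi.single_smul, smul_eq_mul, inv_mul_cancel₀ hpos.ne']
    rw [single_s]
    simp only [ψ, mulVec_smul, mulVec_sub, hP1, hPh]
    module
  have ψ_right : ψ t = 0 := by simp [ψ, h, equilibriumPotential_right]
  have ψ_left : ψ s = q⁻¹ := by simp [ψ, h, equilibriumPotential_left hst]
  have super : Pi.single s 1 + ({t}ᶜ : Set α).indicator (P *ᵥ ψ) ≤ ψ := by
    intro x
    by_cases ht : x = t
    · subst ht; simp [hst.symm, ψ_right]
    · simp [ht, mulVec_ψ]
  refine Real.tsum_le_of_sum_range_le (fun _ => pathSum_nonneg hP.1) fun N => ?_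
  simpa [mulVec_ψ, ψ_left, hst] using sum_range_pathSum_le_mulVec hP.1 hψ0 super N s

end PotentialTheory

section Fourier

variable {G : Type*} [AddCommGroup G] [Fintype G] {w : G → ℝ}

/-- The symbol of the random walk with step distribution `w`: its value at the character `ψ` is the
eigenvalue of the walk on `ψ`. It takes the real part, as it is meant for even `w`. -/
noncomputable def stepSymbol (w : G → ℝ) (ψ : AddChar G ℂ) : ℝ :=
  ∑ z, w z * (ψ z).re

lemma circulant_mulVec_re_addChar (hw : ∀ z, w (-z) = w z) (ψ : AddChar G ℂ) (a : G) :
    circulant w *ᵥ (fun y => (ψ (y - a)).re) = stepSymbol w ψ • fun y => (ψ (y - a)).re := by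
  have sum_im : ∑ z, w z * (ψ z).im = 0 := by
    have := Equiv.sum_comp (Equiv.neg G) fun z => w z * (ψ z).im
    simp only [Equiv.neg_apply, hw, AddChar.map_neg_eq_conj, Complex.conj_im, mul_neg,
      Finset.sum_neg_distrib] at this
    linarith
  ext x
  calc ∑ y, w (x - y) * (ψ (y - a)).re
      = ∑ z, w z * (ψ (x - a - z)).re := by
        rw [← (Equiv.subLeft x).sum_comp]
        simp [sub_right_comm]
    _ = ∑ z, (w z * (ψ z).re * (ψ (x - a)).re + w z * (ψ z).im * (ψ (x - a)).im) := by
        refine Finset.sum_congr rfl fun z _ => ?_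
        rw [sub_eq_add_neg, AddChar.map_add_eq_mul, AddChar.map_neg_eq_conj, Complex.mul_re,
          Complex.conj_re, Complex.conj_im]
        ring
    _ = stepSymbol w ψ * (ψ (x - a)).re := by
        rw [Finset.sum_add_distrib, ← Finset.sum_mul, ← Finset.sum_mul, sum_im, zero_mul, add_zero,
          stepSymbol]

/-- The potential of the random walk with step distribution `w` for a unit charge at `t` and
a charge `-1` at `s`. The trivial character contributes `0 / 0 = 0`. -/
noncomputable def dipolePotential (w : G → ℝ) (s t x : G) : ℝ :=
  (∑ ψ : AddChar G ℂ, ((ψ (x - t)).re - (ψ (x - s)).re) / (1 - stepSymbol w ψ)) / Fintype.card G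

variable {s t : G}

lemma dipolePotential_sub_le (hlt : ∀ ψ ≠ 0, stepSymbol w ψ < 1) :
    dipolePotential w s t t - dipolePotential w s t s ≤
      4 * ((∑ ψ ∈ Finset.univ.erase (0 : AddChar G ℂ), (1 - stepSymbol w ψ)⁻¹) /
        Fintype.card G) := by
  have abs_re_le (ψ : AddChar G ℂ) (x : G) : |(ψ x).re| ≤ 1 :=
    (Complex.abs_re_le_norm _).trans_eq (AddChar.norm_apply ψ x)
  rw [dipolePotential, dipolePotential, ← sub_div, ← Finset.sum_sub_distrib, ← mul_div_assoc,
    Finset.mul_sum, ← Finset.sum_erase Finset.univ (a := 0) (by simp)]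
  gcongr with ψ hψ
  have hpos := inv_pos.2 (sub_pos.2 (hlt ψ (Finset.ne_of_mem_erase hψ)))
  have ht := (abs_le.1 (abs_re_le ψ (t - s))).1
  have hs := (abs_le.1 (abs_re_le ψ (s - t))).1
  rw [← sub_div, div_eq_mul_inv]
  gcongr
  simp only [sub_self, AddChar.map_zero_eq_one, Complex.one_re]
  linarith

variable [DecidableEq G]

lemma sum_re_addChar (x a : G) :
    (∑ ψ : AddChar G ℂ, (ψ (x - a)).re) / Fintype.card G = (Pi.single a 1 : G → ℝ) x := by
  rw [← Complex.re_sum, AddChar.sum_apply_eq_ite]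
  simp [sub_eq_zero, Pi.single_apply, apply_ite Complex.re, ite_div]

lemma dipolePotential_sub_mulVec (hw : ∀ z, w (-z) = w z) (hlt : ∀ ψ ≠ 0, stepSymbol w ψ < 1) :
    dipolePotential w s t - circulant w *ᵥ dipolePotential w s t =
      Pi.single t 1 - Pi.single s 1 := by
  have dipole_eq : dipolePotential w s t = (Fintype.card G : ℝ)⁻¹ • ∑ ψ : AddChar G ℂ,
      (1 - stepSymbol w ψ)⁻¹ • ((fun x => (ψ (x - t)).re) - fun x => (ψ (x - s)).re) := by
    ext x
    simp [dipolePotential, div_eq_inv_mul]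
  ext x
  rw [Pi.sub_apply, Pi.sub_apply, ← sum_re_addChar x t, ← sum_re_addChar x s, ← sub_div,
    ← Finset.sum_sub_distrib, dipole_eq]
  simp only [mulVec_smul, mulVec_sum, mulVec_sub, circulant_mulVec_re_addChar hw, Pi.sub_apply,
    Pi.smul_apply, Finset.sum_apply, smul_eq_mul, div_eq_inv_mul, ← mul_sub,
    ← Finset.sum_sub_distrib]
  congr 1
  refine Finset.sum_congr rfl fun ψ _ => ?_
  rcases eq_or_ne ψ 0 with rfl | hψ
  · simp
  · have := (sub_pos.2 (hlt ψ hψ)).ne'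
    field_simp

end Fourier

section TorusCharacters

variable {ι : Type*} [Fintype ι] {p : ℕ} [NeZero p]

/-- The character `z ↦ exp (2πi k·z / p)` of the torus. -/
noncomputable def torusChar (k : ι → ZMod p) : AddChar (ι → ZMod p) ℂ where
  toFun z := ZMod.stdAddChar (k ⬝ᵥ z)
  map_zero_eq_one' := by simp
  map_add_eq_mul' y z := by rw [dotProduct_add, AddChar.map_add_eq_mul]

lemma torusChar_apply (k z : ι → ZMod p) : torusChar k z = ZMod.stdAddChar (k ⬝ᵥ z) := rfl

lemma torusChar_zero : torusChar (0 : ι → ZMod p) = 0 := by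
  ext z
  simp [torusChar_apply]

lemma torusChar_bijective :
    Function.Bijective (torusChar : (ι → ZMod p) → AddChar (ι → ZMod p) ℂ) := by
  classical
  refine (Fintype.bijective_iff_injective_and_card _).2 ⟨fun k l hkl => ?_, ?_⟩
  · ext j
    have := DFunLike.congr_fun hkl (Pi.single j 1)
    simp only [torusChar_apply, dotProduct_single, mul_one] at this
    rw [ZMod.injective_stdAddChar this]
  · simpa only [Nat.card_eq_fintype_card] using (AddChar.card_eq (α := ι → ZMod p)).symm

end TorusCharacters

section SimpleRandomWalk

variable {d p : ℕ} [NeZero p]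

lemma srwStep_eq_card_sub (x y : Fin d → ZMod p) :
    srwStep d p x y =
      (Finset.card {m : Fin d × Bool | y - x = Pi.single m.1 (if m.2 then 1 else -1)} : ℝ) /
        (2 * d) := by
  have update_add (j : Fin d) (c : ZMod p) :
      Function.update x j (x j + c) = x + Pi.single j c := by
    ext i
    rcases eq_or_ne i j with rfl | hij <;> simp [*]
  simp only [srwStep, update_add, sub_eq_iff_eq_add']

lemma srwStep_zero_neg (z : Fin d → ZMod p) : srwStep d p 0 (-z) = srwStep d p 0 z := by
  rw [srwStep_eq_card_sub, srwStep_eq_card_sub]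
  congr 2
  refine Finset.card_equiv ((Equiv.refl _).prodCongr Equiv.boolNot) fun m => ?_
  obtain ⟨j, b⟩ := m
  cases b <;> simp [Pi.single_neg, neg_eq_iff_eq_neg]

/-- The transition matrix of the simple random walk on the torus. -/
noncomputable def srwMatrix (d p : ℕ) [NeZero p] : Matrix (Fin d → ZMod p) (Fin d → ZMod p) ℝ :=
  of (srwStep d p)

lemma srwMatrix_eq_circulant : srwMatrix d p = circulant (srwStep d p 0) := by
  ext x y
  rw [srwMatrix, of_apply, circulant_apply, ← srwStep_zero_neg, srwStep_eq_card_sub x,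
    srwStep_eq_card_sub 0, neg_sub, sub_zero]

lemma srwMatrix_isSymm : (srwMatrix d p).IsSymm := by
  rw [srwMatrix_eq_circulant, circulant_isSymm_iff]
  exact srwStep_zero_neg

lemma sum_srwStep_mul (x : Fin d → ZMod p) (φ : (Fin d → ZMod p) → ℝ) :
    ∑ y, srwStep d p x y * φ y =
      (∑ j, (φ (x + Pi.single j 1) + φ (x - Pi.single j 1))) / (2 * d) := by
  calc ∑ y, srwStep d p x y * φ y
      = ∑ y, (∑ m : Fin d × Bool,
          if y - x = Pi.single m.1 (if m.2 then 1 else -1) then φ y else 0) / (2 * d) := by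
        refine Finset.sum_congr rfl fun y _ => ?_
        rw [srwStep_eq_card_sub, ← Finset.sum_filter, Finset.sum_const, nsmul_eq_mul]
        ring
    _ = (∑ j, (φ (x + Pi.single j 1) + φ (x - Pi.single j 1))) / (2 * d) := by
        rw [← Finset.sum_div, Finset.sum_comm, Fintype.sum_prod_type]
        simp [sub_eq_iff_eq_add', Pi.single_neg, ← sub_eq_add_neg]

lemma srwMatrix_mem_rowStochastic (hd : 0 < d) :
    srwMatrix d p ∈ rowStochastic ℝ (Fin d → ZMod p) := by
  refine ⟨fun x y => ?_, ?_⟩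
  · rw [srwMatrix, of_apply, srwStep]
    positivity
  · ext x
    calc ∑ y, srwStep d p x y * 1
        = (∑ _j : Fin d, ((1 : ℝ) + 1)) / (2 * d) := sum_srwStep_mul x fun _ => 1
      _ = 1 := by
        simp only [Finset.sum_const, Finset.card_univ, Fintype.card_fin, nsmul_eq_mul]
        field_simp
        norm_num

lemma one_sub_stepSymbol_torusChar (hd : 0 < d) (k : Fin d → ZMod p) :
    1 - stepSymbol (srwStep d p 0) (torusChar k) =
      (∑ j, (1 - (ZMod.stdAddChar (k j)).re)) / d := by
  have stepSymbol_eq : stepSymbol (srwStep d p 0) (torusChar k) =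
      (∑ j, (ZMod.stdAddChar (k j)).re) / d := by
    rw [stepSymbol, sum_srwStep_mul]
    simp only [torusChar_apply, zero_add, zero_sub, dotProduct_single, mul_one,
      AddChar.map_neg_eq_conj, Complex.conj_re, ← two_mul, ← Finset.mul_sum]
    rw [mul_div_mul_left _ _ two_ne_zero]
  rw [stepSymbol_eq, Finset.sum_sub_distrib, sub_div]
  simp [hd.ne']

lemma srwHitBeforeReturn_eq_hitBefore (s t : Fin d → ZMod p) :
    srwHitBeforeReturn d p s t = hitBefore (srwMatrix d p) s t s := by
  refine tsum_congr fun n => Finset.sum_congr ?_ fun _ _ => rfl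
  ext x
  simp [IsExcursion]

lemma srwExpectedReturns_eq_tsum_pathSum {s t : Fin d → ZMod p} (hst : s ≠ t) :
    srwExpectedReturns d p s t = ∑' n, pathSum (srwMatrix d p) {t}ᶜ s n s := by
  refine tsum_congr fun n => Finset.sum_congr ?_ fun _ _ => rfl
  ext x
  simp only [Finset.mem_filter, Finset.mem_univ, true_and, IsExcursion, Set.mem_compl_singleton_iff]
  refine and_congr_right fun h0 => and_congr_right fun hlast => ⟨fun h m _ _ => h m, fun h m => ?_⟩
  rcases eq_or_ne m 0 with rfl | hm0
  · rwa [h0]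
  rcases eq_or_ne m (Fin.last (n + 1)) with rfl | hmlast
  · rwa [hlast]
  exact h m hm0 hmlast

end SimpleRandomWalk

section FrequencyEstimates

variable {ι : Type*} [Fintype ι] {p : ℕ}

lemma one_le_sum_valMinAbs_sq {k : ι → ZMod p} (hk : k ≠ 0) :
    1 ≤ ∑ j, (k j).valMinAbs ^ 2 := by
  obtain ⟨j, hj⟩ := Function.ne_iff.1 hk
  calc 1 ≤ (k j).valMinAbs ^ 2 :=
        Int.add_one_le_iff.2 (sq_pos_of_ne_zero ((ZMod.valMinAbs_eq_zero _).not.2 hj))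
    _ ≤ ∑ j, (k j).valMinAbs ^ 2 :=
        Finset.single_le_sum (f := fun j => (k j).valMinAbs ^ 2) (fun _ _ => sq_nonneg _)
          (Finset.mem_univ j)

/-- The distance from `a` to `0` in `ℤ/pℤ`, raised to `1` at `a = 0`, so that negative powers of it
can be summed over the whole group. -/
def truncDist (a : ZMod p) : ℕ := max 1 a.valMinAbs.natAbs

lemma truncDist_pos (a : ZMod p) : 0 < truncDist a :=
  one_pos.trans_le (le_max_left _ _)

lemma prod_truncDist_rpow_pos (k : ι → ZMod p) (r : ℝ) :
    0 < ∏ j, (truncDist (k j) : ℝ) ^ r :=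
  Finset.prod_pos fun j _ => Real.rpow_pos_of_pos (Nat.cast_pos.2 (truncDist_pos (k j))) r

lemma truncDist_sq_le (a : ZMod p) : (truncDist a : ℤ) ^ 2 ≤ 1 + a.valMinAbs ^ 2 := by
  rw [← Int.natAbs_sq a.valMinAbs]
  rcases max_choice 1 a.valMinAbs.natAbs with h | h <;> rw [truncDist, h] <;>
    simp [sq_nonneg]

lemma sum_truncDist_sq_le {k : ι → ZMod p} (hk : k ≠ 0) :
    ∑ j, (truncDist (k j) : ℤ) ^ 2 ≤ (Fintype.card ι + 1) * ∑ j, (k j).valMinAbs ^ 2 :=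
  calc ∑ j, (truncDist (k j) : ℤ) ^ 2
      ≤ ∑ j, (1 + (k j).valMinAbs ^ 2) := Finset.sum_le_sum fun j _ => truncDist_sq_le (k j)
    _ = Fintype.card ι * 1 + ∑ j, (k j).valMinAbs ^ 2 := by simp [Finset.sum_add_distrib]
    _ ≤ Fintype.card ι * ∑ j, (k j).valMinAbs ^ 2 + ∑ j, (k j).valMinAbs ^ 2 := by
        gcongr
        exact one_le_sum_valMinAbs_sq hk
    _ = (Fintype.card ι + 1) * ∑ j, (k j).valMinAbs ^ 2 := by ring

lemma prod_rpow_two_div_card_le [Nonempty ι] {x : ι → ℝ} (hx : ∀ i, 0 ≤ x i) :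
    ∏ i, x i ^ (2 / Fintype.card ι : ℝ) ≤ (∑ i, x i ^ 2) / Fintype.card ι := by
  have := Real.geom_mean_le_arith_mean_weighted Finset.univ (fun _ : ι => 1 / (Fintype.card ι : ℝ))
    (fun i => x i ^ 2) (fun _ _ => by positivity) (by simp) (fun _ _ => by positivity)
  rw [← Finset.mul_sum, one_div_mul_eq_div] at this
  refine (Finset.prod_congr rfl fun i _ => ?_).trans_le this
  rw [← Real.rpow_natCast, ← Real.rpow_mul (hx i)]
  rw [Nat.cast_ofNat, mul_one_div]

variable [NeZero p]

lemma eight_div_sq_mul_valMinAbs_sq_le (a : ZMod p) :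
    8 / (p : ℝ) ^ 2 * (a.valMinAbs : ℝ) ^ 2 ≤ 1 - (ZMod.stdAddChar a).re := by
  have hp : (0 : ℝ) < p := Nat.cast_pos.2 (NeZero.pos p)
  have re_eq_cos : (ZMod.stdAddChar a).re = Real.cos (2 * Real.pi * a.valMinAbs / p) := by
    conv_lhs => rw [← ZMod.coe_valMinAbs a, ZMod.stdAddChar_coe]
    rw [← Complex.exp_ofReal_mul_I_re]
    congr 2
    push_cast
    ring
  have abs_le_half : |(a.valMinAbs : ℝ)| * 2 ≤ p := by
    rw [← Int.cast_abs, ← Nat.cast_natAbs]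
    exact_mod_cast (Nat.le_div_iff_mul_le two_pos).1 (ZMod.natAbs_valMinAbs_le a)
  have angle_le : |2 * Real.pi * a.valMinAbs / p| ≤ Real.pi := by
    rw [abs_div, abs_mul, abs_of_pos Real.two_pi_pos, abs_of_pos hp, div_le_iff₀ hp]
    nlinarith [Real.pi_pos]
  calc 8 / (p : ℝ) ^ 2 * (a.valMinAbs : ℝ) ^ 2
      = 2 / Real.pi ^ 2 * (2 * Real.pi * a.valMinAbs / p) ^ 2 := by
        field_simp
        ring
    _ ≤ 1 - (ZMod.stdAddChar a).re := by
        linarith [Real.cos_le_one_sub_mul_cos_sq angle_le]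

lemma prod_truncDist_rpow_le [Nonempty ι] {k : ι → ZMod p} (hk : k ≠ 0) :
    8 / ((p : ℝ) ^ 2 * (Fintype.card ι + 1)) *
        ∏ j, (truncDist (k j) : ℝ) ^ (2 / Fintype.card ι : ℝ) ≤
      (∑ j, (1 - (ZMod.stdAddChar (k j)).re)) / (Fintype.card ι : ℝ) := by
  have hp : (0 : ℝ) < p := Nat.cast_pos.2 (NeZero.pos p)
  have sum_sq_le : ∑ j, (truncDist (k j) : ℝ) ^ 2 ≤
      ((Fintype.card ι : ℝ) + 1) * ∑ j, ((k j).valMinAbs : ℝ) ^ 2 :=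
    mod_cast sum_truncDist_sq_le hk
  calc 8 / ((p : ℝ) ^ 2 * ((Fintype.card ι : ℝ) + 1)) *
        ∏ j, (truncDist (k j) : ℝ) ^ (2 / Fintype.card ι : ℝ)
      ≤ 8 / ((p : ℝ) ^ 2 * ((Fintype.card ι : ℝ) + 1)) *
        ((((Fintype.card ι : ℝ) + 1) * ∑ j, ((k j).valMinAbs : ℝ) ^ 2) / (Fintype.card ι : ℝ)) := by
        gcongr
        exact (prod_rpow_two_div_card_le fun j => Nat.cast_nonneg _).trans (by gcongr)
    _ = (∑ j, 8 / (p : ℝ) ^ 2 * ((k j).valMinAbs : ℝ) ^ 2) / (Fintype.card ι : ℝ) := by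
        rw [← Finset.mul_sum]
        field_simp
    _ ≤ (∑ j, (1 - (ZMod.stdAddChar (k j)).re)) / (Fintype.card ι : ℝ) := by
        gcongr with j
        exact eight_div_sq_mul_valMinAbs_sq_le (k j)

end FrequencyEstimates

section GreenBound

variable {d p : ℕ} {r : ℝ}

lemma mul_add_one_rpow_sub_one_le {x : ℝ} (hx : 0 ≤ x) (hr : 0 ≤ r) (hr1 : r ≤ 1) :
    r * (x + 1) ^ (r - 1) ≤ (x + 1) ^ r - x ^ r := by
  have hx1 : 0 < x + 1 := by positivity
  have bernoulli : (x / (x + 1)) ^ r ≤ 1 - r / (x + 1) := by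
    have := rpow_one_add_le_one_add_mul_self (s := -(1 / (x + 1)))
      (by rw [neg_le_neg_iff, div_le_one hx1]; linarith) hr hr1
    convert this using 2 <;> field_simp <;> ring
  rw [Real.div_rpow hx hx1.le, div_le_iff₀ (by positivity)] at bernoulli
  rw [Real.rpow_sub_one hx1.ne']
  linear_combination bernoulli

lemma sum_range_rpow_sub_one_le (hr : 0 < r) (hr1 : r ≤ 1) (n : ℕ) :
    ∑ i ∈ Finset.range n, ((i + 1 : ℕ) : ℝ) ^ (r - 1) ≤ (n : ℝ) ^ r / r := by
  rw [le_div_iff₀' hr, Finset.mul_sum]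
  calc ∑ i ∈ Finset.range n, r * ((i + 1 : ℕ) : ℝ) ^ (r - 1)
      ≤ ∑ i ∈ Finset.range n, (((i + 1 : ℕ) : ℝ) ^ r - (i : ℝ) ^ r) := by
        gcongr with i
        exact_mod_cast mul_add_one_rpow_sub_one_le i.cast_nonneg hr.le hr1
    _ = (n : ℝ) ^ r := by
        rw [Finset.sum_range_sub fun i : ℕ => (i : ℝ) ^ r]
        simp [hr.ne']

variable [NeZero p]

lemma sum_natAbs_valMinAbs_le {f : ℕ → ℝ} (hf : 0 ≤ f) :
    ∑ a : ZMod p, f a.valMinAbs.natAbs ≤ f 0 + 2 * ∑ i ∈ Finset.range p, f (i + 1) := by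
  obtain ⟨n, rfl⟩ := Nat.exists_eq_add_one_of_ne_zero (NeZero.ne p)
  have reflect : ∑ i ∈ Finset.range n, f (n - i) = ∑ i ∈ Finset.range n, f (i + 1) := by
    rw [← Finset.sum_range_reflect]
    refine Finset.sum_congr rfl fun i hi => ?_
    have := Finset.mem_range.1 hi
    congr 1
    omega
  calc ∑ a : ZMod (n + 1), f a.valMinAbs.natAbs
      = ∑ a : ZMod (n + 1), f (min a.val (n + 1 - a.val)) := by
        simp only [ZMod.valMinAbs_natAbs_eq_min]
    _ = ∑ i ∈ Finset.range (n + 1), f (min i (n + 1 - i)) :=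
        Fin.sum_univ_eq_sum_range (fun i => f (min i (n + 1 - i))) (n + 1)
    _ = f 0 + ∑ i ∈ Finset.range n, f (min (i + 1) (n - i)) := by
        simp [Finset.sum_range_succ', add_comm]
    _ ≤ f 0 + ∑ i ∈ Finset.range n, (f (i + 1) + f (n - i)) := by
        gcongr with i
        rcases min_choice (i + 1) (n - i) with h | h <;> rw [h]
        exacts [le_add_of_nonneg_right (hf _), le_add_of_nonneg_left (hf _)]
    _ = f 0 + 2 * ∑ i ∈ Finset.range n, f (i + 1) := by
        rw [Finset.sum_add_distrib, reflect, two_mul]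
    _ ≤ f 0 + 2 * ∑ i ∈ Finset.range (n + 1), f (i + 1) := by
        gcongr
        · exact fun _ _ _ => hf _
        · exact Nat.le_succ n

lemma sum_truncDist_rpow_sub_one_le (hr : 0 < r) (hr1 : r ≤ 1) :
    ∑ a : ZMod p, (truncDist a : ℝ) ^ (r - 1) ≤ (1 + 2 / r) * (p : ℝ) ^ r := by
  have one_le_rpow : 1 ≤ (p : ℝ) ^ r :=
    Real.one_le_rpow (mod_cast NeZero.pos p) hr.le
  calc ∑ a : ZMod p, (truncDist a : ℝ) ^ (r - 1)
      ≤ ((max 1 0 : ℕ) : ℝ) ^ (r - 1) +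
          2 * ∑ i ∈ Finset.range p, ((max 1 (i + 1) : ℕ) : ℝ) ^ (r - 1) :=
        sum_natAbs_valMinAbs_le (f := fun n => ((max 1 n : ℕ) : ℝ) ^ (r - 1))
          fun n => Real.rpow_nonneg (Nat.cast_nonneg _) _
    _ = 1 + 2 * ∑ i ∈ Finset.range p, ((i + 1 : ℕ) : ℝ) ^ (r - 1) := by simp
    _ ≤ (p : ℝ) ^ r + 2 * ((p : ℝ) ^ r / r) := by
        gcongr
        exact sum_range_rpow_sub_one_le hr hr1 p
    _ = (1 + 2 / r) * (p : ℝ) ^ r := by ring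

/-- A bound, uniform in `p`, for the average of `1 / (1 - λ)` over the nontrivial characters of the
torus `(ℤ/pℤ)^d`, where `λ` runs through the eigenvalues of the simple random walk. -/
noncomputable def greenBound (d : ℕ) : ℝ :=
  ((d + 1) / 8) * (1 + 2 / (1 - 2 / d)) ^ d

lemma one_sub_two_div_pos (hd : 3 ≤ d) : (0 : ℝ) < 1 - 2 / d := by
  rw [sub_pos, div_lt_one (by positivity)]
  exact_mod_cast hd

lemma greenBound_pos (hd : 3 ≤ d) : 0 < greenBound d := by
  have := one_sub_two_div_pos hd
  rw [greenBound]
  positivity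

lemma prod_truncDist_rpow_le_one_sub_stepSymbol (hd : 0 < d) {k : Fin d → ZMod p} (hk : k ≠ 0) :
    8 / ((p : ℝ) ^ 2 * (d + 1)) * ∏ j, (truncDist (k j) : ℝ) ^ (2 / d : ℝ) ≤
      1 - stepSymbol (srwStep d p 0) (torusChar k) := by
  have : Nonempty (Fin d) := ⟨⟨0, hd⟩⟩
  rw [one_sub_stepSymbol_torusChar hd]
  simpa using prod_truncDist_rpow_le hk

lemma stepSymbol_srwStep_lt_one (hd : 0 < d) {ψ : AddChar (Fin d → ZMod p) ℂ} (hψ : ψ ≠ 0) :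
    stepSymbol (srwStep d p 0) ψ < 1 := by
  obtain ⟨k, rfl⟩ := torusChar_bijective.surjective ψ
  have hk : k ≠ 0 := by
    rintro rfl
    exact hψ torusChar_zero
  have := NeZero.pos p
  have := prod_truncDist_rpow_pos k (2 / d)
  exact sub_pos.1 (lt_of_lt_of_le (by positivity) (prod_truncDist_rpow_le_one_sub_stepSymbol hd hk))

lemma inv_one_sub_stepSymbol_torusChar_le (hd : 0 < d) {k : Fin d → ZMod p} (hk : k ≠ 0) :
    (1 - stepSymbol (srwStep d p 0) (torusChar k))⁻¹ ≤
      (p : ℝ) ^ 2 * (d + 1) / 8 * ∏ j, (truncDist (k j) : ℝ) ^ ((1 - 2 / d : ℝ) - 1) := by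
  have := NeZero.pos p
  have := prod_truncDist_rpow_pos k (2 / d)
  refine (inv_anti₀ (by positivity) (prod_truncDist_rpow_le_one_sub_stepSymbol hd hk)).trans_eq ?_
  rw [mul_inv, inv_div, ← Finset.prod_inv_distrib, sub_right_comm, sub_self, zero_sub]
  simp only [Real.rpow_neg (Nat.cast_nonneg _)]

lemma sq_mul_rpow_one_sub_two_div_pow (hd : 0 < d) {x : ℝ} (hx : 0 < x) :
    x ^ 2 * (x ^ (1 - 2 / d : ℝ)) ^ d = x ^ d := by
  rw [← Real.rpow_natCast, ← Real.rpow_natCast, ← Real.rpow_natCast, ← Real.rpow_mul hx.le,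
    ← Real.rpow_add hx]
  congr 1
  push_cast
  field_simp
  ring

lemma sum_inv_one_sub_stepSymbol_le (hd : 3 ≤ d) :
    ∑ ψ ∈ Finset.univ.erase (0 : AddChar (Fin d → ZMod p) ℂ),
        (1 - stepSymbol (srwStep d p 0) ψ)⁻¹ ≤ greenBound d * (p : ℝ) ^ d := by
  classical
  have hr := one_sub_two_div_pos hd
  have hr1 : (1 : ℝ) - 2 / d ≤ 1 := sub_le_self _ (by positivity)
  set r : ℝ := 1 - 2 / d
  calc ∑ ψ ∈ Finset.univ.erase (0 : AddChar (Fin d → ZMod p) ℂ),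
        (1 - stepSymbol (srwStep d p 0) ψ)⁻¹
      = ∑ k ∈ Finset.univ.erase (0 : Fin d → ZMod p),
          (1 - stepSymbol (srwStep d p 0) (torusChar k))⁻¹ := by
        refine (Finset.sum_bijective torusChar torusChar_bijective (fun k => ?_)
          fun _ _ => rfl).symm
        simp [← torusChar_zero, torusChar_bijective.injective.eq_iff]
    _ ≤ ∑ k ∈ Finset.univ.erase (0 : Fin d → ZMod p),
          (p : ℝ) ^ 2 * (d + 1) / 8 * ∏ j, (truncDist (k j) : ℝ) ^ (r - 1) :=
        Finset.sum_le_sum fun k hk =>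
          inv_one_sub_stepSymbol_torusChar_le (by omega) (Finset.ne_of_mem_erase hk)
    _ ≤ ∑ k : Fin d → ZMod p, (p : ℝ) ^ 2 * (d + 1) / 8 * ∏ j, (truncDist (k j) : ℝ) ^ (r - 1) :=
        Finset.sum_le_sum_of_subset_of_nonneg (Finset.erase_subset _ _) fun _ _ _ => by positivity
    _ = (p : ℝ) ^ 2 * (d + 1) / 8 * (∑ a : ZMod p, (truncDist a : ℝ) ^ (r - 1)) ^ d := by
        rw [← Finset.mul_sum, Fintype.sum_pow]
    _ ≤ (p : ℝ) ^ 2 * (d + 1) / 8 * ((1 + 2 / r) * (p : ℝ) ^ r) ^ d := by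
        gcongr
        exact sum_truncDist_rpow_sub_one_le hr hr1
    _ = greenBound d * ((p : ℝ) ^ 2 * ((p : ℝ) ^ r) ^ d) := by
        rw [greenBound, mul_pow]
        ring
    _ = greenBound d * (p : ℝ) ^ d := by
        rw [sq_mul_rpow_one_sub_two_div_pow (by omega) (Nat.cast_pos.2 (NeZero.pos p))]

lemma srw_dipolePotential_sub_le (hd : 3 ≤ d) (s t : Fin d → ZMod p) :
    dipolePotential (srwStep d p 0) s t t - dipolePotential (srwStep d p 0) s t s ≤
      4 * greenBound d := by
  have := NeZero.pos p
  refine (dipolePotential_sub_le fun ψ => stepSymbol_srwStep_lt_one (by omega)).trans ?_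
  gcongr
  rw [div_le_iff₀ (by positivity)]
  simpa using sum_inv_one_sub_stepSymbol_le hd

lemma one_le_hitBefore_mul (hd : 3 ≤ d) {s t : Fin d → ZMod p} (hst : s ≠ t) :
    1 ≤ hitBefore (srwMatrix d p) s t s * (4 * greenBound d) := by
  have hP : srwMatrix d p ∈ rowStochastic ℝ (Fin d → ZMod p) :=
    srwMatrix_mem_rowStochastic (by omega)
  have poisson := dipolePotential_sub_mulVec (s := s) (t := t) (w := srwStep d p 0)
    srwStep_zero_neg fun ψ => stepSymbol_srwStep_lt_one (by omega)
  rw [← srwMatrix_eq_circulant] at poisson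
  rw [← hitBefore_mul_sub hP srwMatrix_isSymm hst poisson]
  exact mul_le_mul_of_nonneg_left (srw_dipolePotential_sub_le hd s t) (hitBefore_nonneg hP.1 s)

end GreenBound

/-- **Lemma 3 (kernel estimate).** For `d ≥ 3` there is `δ_d > 0` such that for every
`p ≥ 2` and every pair of distinct sites `s₀ ≠ s_i` of the torus `T_p^d`, the simple
random walk started at `s₀` hits `s_i` before returning to `s₀` with probability at
least `δ_d`; consequently the expected number of returns to `s₀` strictly before
hitting `s_i` is at most `1/δ_d`. -/
theorem srw_hit_before_return_unif_pos (d : ℕ) (hd : 3 ≤ d) :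
    ∃ δ > (0 : ℝ), ∀ (p : ℕ) (hp : 2 ≤ p), ∀ s₀ si : Fin d → ZMod p, s₀ ≠ si →
      δ ≤ @srwHitBeforeReturn d p ⟨by omega⟩ s₀ si ∧
      @srwExpectedReturns d p ⟨by omega⟩ s₀ si ≤ 1 / δ := by
  have hC : 0 < 4 * greenBound d := mul_pos four_pos (greenBound_pos hd)
  refine ⟨1 / (4 * greenBound d), one_div_pos.2 hC, fun p hp s₀ si hne => ?_⟩
  have : NeZero p := ⟨by omega⟩
  have hit_ge : 1 / (4 * greenBound d) ≤ hitBefore (srwMatrix d p) s₀ si s₀ :=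
    (div_le_iff₀ hC).2 (one_le_hitBefore_mul hd hne)
  have hit_pos := (one_div_pos.2 hC).trans_le hit_ge
  refine ⟨hit_ge.trans_eq (srwHitBeforeReturn_eq_hitBefore s₀ si).symm, ?_⟩
  calc srwExpectedReturns d p s₀ si
      = ∑' n, pathSum (srwMatrix d p) {si}ᶜ s₀ n s₀ := srwExpectedReturns_eq_tsum_pathSum hne
    _ ≤ (hitBefore (srwMatrix d p) s₀ si s₀)⁻¹ - 1 :=
        tsum_pathSum_compl_singleton_le (srwMatrix_mem_rowStochastic (by omega)) hne hit_pos
    _ ≤ (hitBefore (srwMatrix d p) s₀ si s₀)⁻¹ := sub_le_self _ zero_le_one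
    _ ≤ 1 / (1 / (4 * greenBound d)) := by
        rw [one_div (1 / _)]
        exact inv_anti₀ (one_div_pos.2 hC) hit_ge
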